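/- Let μ be an ergodic translation-invariant Gibbs measure for the 1-2 model on the hexagonal lattice ℍ (with any weights a, b, c > 0), and let 𝒩_{001}(ω) denote the number of infinite {001}-clusters of ω. Then for every integer k with 1 < k < ∞, μ({ω : 𝒩_{001}(ω) = k}) = 0. -/

import Mathlib

open MeasureTheory

/-- Vertices of the hexagonal lattice: `(x, y, t)` with `t = true` the "upper" vertex. -/
abbrev HexV : Type := ℤ × ℤ × Bool

/-- Edges of the hexagonal lattice: `(x, y, k)` with `k = 0` the a-type (horizontal) edge
joining `(x,y,1)` to `(x,y,0)`, `k = 1` the b-type edge joining `(x,y,1)` to `(x+1,y,0)`,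
`k = 2` the c-type edge joining `(x,y,1)` to `(x,y+1,0)`. -/
abbrev HexE : Type := ℤ × ℤ × Fin 3

/-- A configuration assigns present/absent to each edge. -/
abbrev Config : Type := HexE → Bool

def end1 (e : HexE) : HexV := (e.1, e.2.1, true)

def end2 (e : HexE) : HexV :=
  if e.2.2 = 0 then (e.1, e.2.1, false)
  else if e.2.2 = 1 then (e.1 + 1, e.2.1, false)
  else (e.1, e.2.1 + 1, false)

/-- The edges incident to a vertex, indexed so that index `0` is the a-type (horizontal)
edge, index `1` the b-type edge, index `2` the c-type edge. -/
def edgesAt (v : HexV) : Fin 3 → HexE := fun i =>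
  if v.2.2 then (v.1, v.2.1, i)
  else if i = 0 then (v.1, v.2.1, 0)
  else if i = 1 then (v.1 - 1, v.2.1, 1)
  else (v.1, v.2.1 - 1, 2)

/-- Local configuration of `ω` at `v`: digit `0` (rightmost) is the a-type edge,
digit `1` the b-type edge, digit `2` (leftmost) the c-type edge. -/
def localConf (ω : Config) (v : HexV) : Fin 3 → Bool := fun i => ω (edgesAt v i)

/-- A 1-2 model configuration: every vertex is incident to one or two present edges. -/
def IsConfig (ω : Config) : Prop :=
  ∀ v : HexV,
    1 ≤ (Finset.univ.filter fun i : Fin 3 => localConf ω v i = true).card ∧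
    (Finset.univ.filter fun i : Fin 3 => localConf ω v i = true).card ≤ 2

/-- The local configuration type `{001}` : only the a-type (horizontal) edge is present. -/
def conf001 : Fin 3 → Bool := ![true, false, false]

/-- The six admissible local configuration types `{001},…,{110}`. -/
def validConf (τ : Fin 3 → Bool) : Prop :=
  τ ≠ ![false, false, false] ∧ τ ≠ ![true, true, true]

/-- Vertex weight: `w(001)=w(110)=a`, `w(010)=w(101)=b`, `w(011)=w(100)=c`. -/
def weight (a b c : ℝ) (f : Fin 3 → Bool) : ℝ :=
  match f 2, f 1, f 0 with
  | false, false, true  => a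
  | true,  true,  false => a
  | false, true,  false => b
  | true,  false, true  => b
  | false, true,  true  => c
  | true,  false, false => c
  | false, false, false => 0
  | true,  true,  true  => 0

/-- Adjacency in the hexagonal lattice. -/
def HexAdj (v w : HexV) : Prop :=
  v ≠ w ∧ ∃ e : HexE, (v = end1 e ∨ v = end2 e) ∧ (w = end1 e ∨ w = end2 e)

/-- Adjacency restricted to a vertex set `S`. -/
def adjIn (S : Set HexV) (v w : HexV) : Prop := HexAdj v w ∧ v ∈ S ∧ w ∈ S

/-- The connected component of `v` in the subgraph induced on `S`. -/
def compOf (S : Set HexV) (v : HexV) : Set HexV := {w | Relation.ReflTransGen (adjIn S) v w}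

/-- `C` is a connected component of the subgraph induced on `S`. -/
def IsCompOf (S : Set HexV) (C : Set HexV) : Prop := ∃ v ∈ S, C = compOf S v

/-- Vertices whose local configuration equals `τ`. -/
def confSet (ω : Config) (τ : Fin 3 → Bool) : Set HexV := {v | localConf ω v = τ}

/-- A `τ`-cluster of `ω`. -/
def IsCluster (ω : Config) (τ : Fin 3 → Bool) (C : Set HexV) : Prop :=
  IsCompOf (confSet ω τ) C

/-- The number of infinite `τ`-clusters of `ω`, as an extended natural number. -/
noncomputable def numInfClusters (ω : Config) (τ : Fin 3 → Bool) : ℕ∞ :=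
  {C : Set HexV | IsCluster ω τ C ∧ C.Infinite}.encard

def endsFinset (e : HexE) : Finset HexV := {end1 e, end2 e}

/-- Vertices incident to an edge of `F`. -/
def verts (F : Finset HexE) : Finset HexV := F.biUnion endsFinset

/-- Edges sharing an endpoint with an edge of `F`. -/
def edgeNbhd (F : Finset HexE) : Set HexE :=
  {e' | ∃ e ∈ F,
    end1 e = end1 e' ∨ end1 e = end2 e' ∨ end2 e = end1 e' ∨ end2 e = end2 e'}

/-- Cylinder event: configurations agreeing with `σ` on `S`. -/
def cyl (S : Set HexE) (σ : Config) : Set Config := {ω | ∀ e ∈ S, ω e = σ e}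

/-- A Gibbs measure for the 1-2 model with weights `a`, `b`, `c`. -/
def IsGibbs (a b c : ℝ) (μ : Measure Config) : Prop :=
  IsProbabilityMeasure μ ∧ μ {ω | IsConfig ω} = 1 ∧
  ∀ F : Finset HexE, ∀ σ τ : Config, IsConfig σ → IsConfig τ →
    (∀ e ∉ F, σ e = τ e) →
    μ (cyl (↑F ∪ edgeNbhd F) σ) *
        ENNReal.ofReal (∏ v ∈ verts F, weight a b c (localConf τ v)) =
      μ (cyl (↑F ∪ edgeNbhd F) τ) *
        ENNReal.ofReal (∏ v ∈ verts F, weight a b c (localConf σ v))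

/-- Translation of edges by `g ∈ ℤ²`. -/
def shiftE (g : ℤ × ℤ) (e : HexE) : HexE := (e.1 + g.1, e.2.1 + g.2, e.2.2)

/-- Induced translation action on configurations. -/
def shiftConfig (g : ℤ × ℤ) (ω : Config) : Config := fun e => ω (shiftE g e)

/-- Translation invariance of a measure on configurations. -/
def TransInvariant (μ : Measure Config) : Prop :=
  ∀ g : ℤ × ℤ, μ.map (shiftConfig g) = μ

/-- Ergodicity: every translation-invariant measurable event has measure `0` or `1`. -/
def IsErgodicTI (μ : Measure Config) : Prop :=
  ∀ A : Set Config, MeasurableSet A → (∀ g, shiftConfig g ⁻¹' A = A) → μ A = 0 ∨ μ A = 1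

/-- The box `B_n(i,j)`. -/
def box (n : ℕ) (i j : ℤ) : Set HexV :=
  {v | |v.1 - i| ≤ (n : ℤ) ∧ |v.2.1 - j| ≤ (n : ℤ)}

/-- Vertices outside `B` adjacent to a vertex of `B`. -/
def outerBoundary (B : Set HexV) : Set HexV := {v | v ∉ B ∧ ∃ w ∈ B, HexAdj v w}

/-- `B_N(i,j)` is an encounter box for `ω` with respect to the infinite `{001}`-cluster `C`. -/
def IsEncounterBoxWrt (ω : Config) (N : ℕ) (i j : ℤ) (C : Set HexV) : Prop :=
  IsCluster ω conf001 C ∧ C.Infinite ∧ box N i j ⊆ C ∧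
  (∀ D, IsCompOf (C \ box (N + 2) i j) D → D.Infinite) ∧
  {D : Set HexV | IsCompOf (C \ box (N + 2) i j) D ∧ D.Infinite}.encard = 3

/-- `B_N(i,j)` is an encounter box for `ω`. -/
def IsEncounterBox (ω : Config) (N : ℕ) (i j : ℤ) : Prop :=
  ∃ C : Set HexV, IsEncounterBoxWrt ω N i j C

/-- A 3-partition of `Y`: an unordered triple of pairwise disjoint nonempty sets with union `Y`. -/
def IsThreePartition {α : Type*} (Y : Set α) (P : Set (Set α)) : Prop :=
  ∃ P₁ P₂ P₃ : Set α, P = {P₁, P₂, P₃} ∧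
    P₁.Nonempty ∧ P₂.Nonempty ∧ P₃.Nonempty ∧
    Disjoint P₁ P₂ ∧ Disjoint P₁ P₃ ∧ Disjoint P₂ P₃ ∧
    P₁ ∪ P₂ ∪ P₃ = Y

/-- Two 3-partitions are compatible if their parts can be ordered so that `Q₂ ∪ Q₃ ⊆ P₁`. -/
def CompatiblePartitions {α : Type*} (P Q : Set (Set α)) : Prop :=
  ∃ P₁ ∈ P, ∃ Q₁ ∈ Q, ∀ R ∈ Q, R ≠ Q₁ → R ⊆ P₁


/-! ## Basic geometry -/

abbrev S1 (ω : Config) : Set HexV := confSet ω conf001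

def Conn (ω : Config) (v w : HexV) : Prop := Relation.ReflTransGen (adjIn (S1 ω)) v w

def InfC (ω : Config) (v : HexV) : Prop := ∀ T : Finset HexV, ∃ w, w ∉ T ∧ Conn ω v w

def TwoC (ω : Config) : Prop := ∃ v w, InfC ω v ∧ InfC ω w ∧ ¬ Conn ω v w

def FinC (ω : Config) : Prop :=
  ∃ T : Finset HexV, ∀ v, InfC ω v → ∃ w, w ∈ T ∧ Conn ω v w

lemma infC_iff (ω : Config) (v : HexV) : InfC ω v ↔ (compOf (S1 ω) v).Infinite := by
  constructor
  · intro h hf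
    obtain ⟨w, hw, hc⟩ := h hf.toFinset
    exact hw (hf.mem_toFinset.2 hc)
  · intro h T
    obtain ⟨w, hw, hT⟩ := h.exists_notMem_finset T
    exact ⟨w, hT, hw⟩

lemma hexAdj_symm {v w : HexV} (h : HexAdj v w) : HexAdj w v := by
  obtain ⟨h1, e, h2, h3⟩ := h
  exact ⟨h1.symm, e, h3, h2⟩

lemma conn_symm {ω : Config} {v w : HexV} (h : Conn ω v w) : Conn ω w v := by
  unfold Conn at *
  induction h with
  | refl => exact .refl
  | tail _ h ih => exact .head ⟨hexAdj_symm h.1, h.2.2, h.2.1⟩ ih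

lemma adjA (x y : ℤ) : HexAdj (x, y, true) (x, y, false) :=
  ⟨by simp, (x, y, 0), by simp [end1], by simp [end2]⟩

lemma adjB (x y : ℤ) : HexAdj (x, y, true) (x + 1, y, false) :=
  ⟨by simp, (x, y, 1), by simp [end1], by simp [end2]⟩

lemma adjC (x y : ℤ) : HexAdj (x, y, true) (x, y + 1, false) :=
  ⟨by simp, (x, y, 2), by simp [end1], by simp [end2]⟩

lemma memS_top (ω : Config) (x y : ℤ) : (x, y, true) ∈ S1 ω ↔
    ω (x, y, 0) = true ∧ ω (x, y, 1) = false ∧ ω (x, y, 2) = false := by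
  simp [confSet, localConf, conf001, edgesAt, funext_iff, Fin.forall_fin_succ]

lemma memS_bot (ω : Config) (x y : ℤ) : (x, y, false) ∈ S1 ω ↔
    ω (x, y, 0) = true ∧ ω (x - 1, y, 1) = false ∧ ω (x, y - 1, 2) = false := by
  simp [confSet, localConf, conf001, edgesAt, funext_iff, Fin.forall_fin_succ]

lemma card_cond (f : Fin 3 → Bool) :
    (1 ≤ (Finset.univ.filter fun i : Fin 3 => f i = true).card ∧
    (Finset.univ.filter fun i : Fin 3 => f i = true).card ≤ 2) ↔
    (f 0 = true ∨ f 1 = true ∨ f 2 = true) ∧ (f 0 = false ∨ f 1 = false ∨ f 2 = false) := by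
  revert f; decide

lemma isConfig_iff (ω : Config) : IsConfig ω ↔
    (∀ x y : ℤ, (ω (x, y, 0) = true ∨ ω (x, y, 1) = true ∨ ω (x, y, 2) = true) ∧
      (ω (x, y, 0) = false ∨ ω (x, y, 1) = false ∨ ω (x, y, 2) = false)) ∧
    (∀ x y : ℤ, (ω (x, y, 0) = true ∨ ω (x - 1, y, 1) = true ∨ ω (x, y - 1, 2) = true) ∧
      (ω (x, y, 0) = false ∨ ω (x - 1, y, 1) = false ∨ ω (x, y - 1, 2) = false)) := by
  unfold IsConfig
  simp only [card_cond]
  constructor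
  · intro h
    exact ⟨fun x y => by simpa [localConf, edgesAt] using h (x, y, true),
      fun x y => by simpa [localConf, edgesAt] using h (x, y, false)⟩
  · rintro ⟨h1, h2⟩ ⟨x, y, t⟩
    cases t
    · simpa [localConf, edgesAt] using h2 x y
    · simpa [localConf, edgesAt] using h1 x y

def TopE (ω : Config) (x y : ℤ) : Prop :=
  (x, y, false) ∈ S1 ω ∧ ((x - 1, y, true) ∈ S1 ω ∨ (x, y - 1, true) ∈ S1 ω)

def BotE (ω : Config) (x y : ℤ) : Prop :=
  (x, y, true) ∈ S1 ω ∧ ((x + 1, y, false) ∈ S1 ω ∨ (x, y + 1, false) ∈ S1 ω)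

/-- Fill a rectangle. -/
def fill (x0 x1 y0 y1 : ℤ) (ω : Config) : Config := fun e =>
  if e.2.2 = 0 then
    (if x0 ≤ e.1 ∧ e.1 ≤ x1 ∧ y0 ≤ e.2.1 ∧ e.2.1 ≤ y1 ∧ ¬(e.1 = x1 ∧ e.2.1 = y1) ∧
      ¬ (e.1 = x0 ∧ e.2.1 = y0) then true else ω e)
  else if e.2.2 = 1 then
    (if x0 ≤ e.1 ∧ e.1 + 1 ≤ x1 ∧ y0 ≤ e.2.1 ∧ e.2.1 ≤ y1 then false else ω e)
  else
    (if x0 ≤ e.1 ∧ e.1 ≤ x1 ∧ y0 ≤ e.2.1 ∧ e.2.1 + 1 ≤ y1 then false else ω e)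

section fill
variable (x0 x1 y0 y1 : ℤ) (ω : Config)

lemma fillA (x y : ℤ) : fill x0 x1 y0 y1 ω (x, y, 0) =
   (if x0 ≤ x ∧ x ≤ x1 ∧ y0 ≤ y ∧ y ≤ y1 ∧ ¬(x = x1 ∧ y = y1) ∧
      ¬ (x = x0 ∧ y = y0) then true else ω (x, y, 0)) := by simp [fill]
lemma fillB (x y : ℤ) : fill x0 x1 y0 y1 ω (x, y, 1) =
   (if x0 ≤ x ∧ x + 1 ≤ x1 ∧ y0 ≤ y ∧ y ≤ y1 then false else ω (x, y, 1)) := by simp [fill]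
lemma fillC (x y : ℤ) : fill x0 x1 y0 y1 ω (x, y, 2) =
   (if x0 ≤ x ∧ x ≤ x1 ∧ y0 ≤ y ∧ y + 1 ≤ y1 then false else ω (x, y, 2)) := by simp [fill]

def inR (v : HexV) : Prop :=
  x0 ≤ v.1 ∧ v.1 ≤ x1 ∧ y0 ≤ v.2.1 ∧ v.2.1 ≤ y1 ∧ v ≠ (x1, y1, true) ∧ v ≠ (x0, y0, false)

lemma fill_isConfig (h : IsConfig ω) (hx : x0 + 3 ≤ x1) (hy : y0 + 3 ≤ y1)
    (hT : TopE ω x1 y1) (hB : BotE ω x0 y0) : IsConfig (fill x0 x1 y0 y1 ω) := by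
  rw [isConfig_iff] at h ⊢
  have hT := (memS_bot _ _ _).1 hT.1
  have hB := (memS_top _ _ _).1 hB.1
  constructor
  · intro x y
    have := h.1 x y
    rw [fillA, fillB, fillC]
    by_cases hc : x = x0 ∧ y = y0
    · obtain ⟨rfl, rfl⟩ := hc
      rw [hB.1, hB.2.1, hB.2.2]; simp
    · split_ifs <;> first | exact this | (simp; done) | (exfalso; omega)
  · intro x y
    have := h.2 x y
    rw [fillA, fillB, fillC]
    by_cases hc : x = x1 ∧ y = y1
    · obtain ⟨rfl, rfl⟩ := hc
      rw [hT.1, hT.2.1, hT.2.2]; simp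
    · split_ifs <;> first | exact this | (simp; done) | (exfalso; omega)

lemma S_sub_fill : S1 ω ⊆ S1 (fill x0 x1 y0 y1 ω) := by
  rintro ⟨x, y, t⟩ h
  cases t
  · rw [memS_bot] at h ⊢
    rw [fillA, fillB, fillC, h.1, h.2.1, h.2.2]; simp
  · rw [memS_top] at h ⊢
    rw [fillA, fillB, fillC, h.1, h.2.1, h.2.2]; simp

lemma fill_sub (v : HexV) (hv : v ∈ S1 (fill x0 x1 y0 y1 ω)) (hR : ¬ inR x0 x1 y0 y1 v) :
    v ∈ S1 ω := by
  obtain ⟨x, y, t⟩ := v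
  simp only [inR, ne_eq, Prod.mk.injEq] at hR
  cases t
  · rw [memS_bot] at hv ⊢
    rw [fillA, fillB, fillC] at hv
    simp at hR
    split_ifs at hv <;> first | exact hv | (exfalso; omega)
  · rw [memS_top] at hv ⊢
    rw [fillA, fillB, fillC] at hv
    simp at hR
    split_ifs at hv <;> first | exact hv | (exfalso; omega)

lemma conn_step {ω : Config} {v w : HexV} (h : HexAdj v w) (hv : v ∈ S1 ω) (hw : w ∈ S1 ω) :
    Conn ω v w := Relation.ReflTransGen.single ⟨h, hv, hw⟩

lemma Conn.trans {ω : Config} {u v w : HexV} (h : Conn ω u v) (h' : Conn ω v w) : Conn ω u w :=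
  Relation.ReflTransGen.trans h h'

lemma stA {ω : Config} {x y : ℤ} (h1 : (x, y, true) ∈ S1 ω) (h2 : (x, y, false) ∈ S1 ω) :
    Conn ω (x, y, true) (x, y, false) := conn_step (adjA x y) h1 h2
lemma stB {ω : Config} {x y : ℤ} (h1 : (x - 1, y, true) ∈ S1 ω) (h2 : (x, y, false) ∈ S1 ω) :
    Conn ω (x - 1, y, true) (x, y, false) :=
  conn_step (by simpa using adjB (x-1) y) h1 h2
lemma stC {ω : Config} {x y : ℤ} (h1 : (x, y - 1, true) ∈ S1 ω) (h2 : (x, y, false) ∈ S1 ω) :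
    Conn ω (x, y - 1, true) (x, y, false) :=
  conn_step (by simpa using adjC x (y-1)) h1 h2
lemma stB' {ω : Config} {x y : ℤ} (h1 : (x, y, true) ∈ S1 ω) (h2 : (x + 1, y, false) ∈ S1 ω) :
    Conn ω (x, y, true) (x + 1, y, false) := conn_step (adjB x y) h1 h2
lemma stC' {ω : Config} {x y : ℤ} (h1 : (x, y, true) ∈ S1 ω) (h2 : (x, y + 1, false) ∈ S1 ω) :
    Conn ω (x, y, true) (x, y + 1, false) := conn_step (adjC x y) h1 h2

lemma top_free (x y : ℤ) (h1 : x0 ≤ x) (h2 : x < x1) (h3 : y0 ≤ y) (h4 : y < y1)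
    (h : ¬ (x = x0 ∧ y = y0)) : (x, y, true) ∈ S1 (fill x0 x1 y0 y1 ω) := by
  rw [memS_top, fillA, fillB, fillC, if_pos (by omega), if_pos (by omega), if_pos (by omega)]
  simp

lemma bot_free (x y : ℤ) (h1 : x0 < x) (h2 : x ≤ x1) (h3 : y0 < y) (h4 : y ≤ y1)
    (h : ¬ (x = x1 ∧ y = y1)) : (x, y, false) ∈ S1 (fill x0 x1 y0 y1 ω) := by
  rw [memS_bot, fillA, fillB, fillC, if_pos (by omega), if_pos (by omega), if_pos (by omega)]
  simp

lemma inner_conn (x y : ℤ) (h1 : x0 < x) (h2 : x < x1) (h3 : y0 < y) (h4 : y < y1) :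
    Conn (fill x0 x1 y0 y1 ω) (x, y, true) (x0 + 1, y0 + 1, true) := by
  have row : ∀ n : ℕ, x0 + 1 + n < x1 →
      Conn (fill x0 x1 y0 y1 ω) (x0 + 1 + n, y, true) (x0 + 1, y, true) := by
    intro n
    induction n with
    | zero => intro _; simp only [Nat.cast_zero, add_zero]; exact Relation.ReflTransGen.refl
    | succ n ih =>
      intro hn
      push_cast at hn ⊢
      refine Conn.trans ?_ (ih (by omega))
      have t1 := top_free x0 x1 y0 y1 ω (x0 + 1 + (n + 1)) y (by omega) (by omega) (by omega)
        (by omega) (by omega)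
      have t2 := bot_free x0 x1 y0 y1 ω (x0 + 1 + (n + 1)) y (by omega) (by omega) (by omega)
        (by omega) (by omega)
      have t3 := top_free x0 x1 y0 y1 ω (x0 + 1 + (n + 1) - 1) y (by omega) (by omega) (by omega)
        (by omega) (by omega)
      have := (stA t1 t2).trans (conn_symm (stB t3 t2))
      rwa [show x0 + 1 + ((n:ℤ) + 1) - 1 = x0 + 1 + n by ring] at this
  have col : ∀ n : ℕ, y0 + 1 + n < y1 →
      Conn (fill x0 x1 y0 y1 ω) (x0 + 1, y0 + 1 + n, true) (x0 + 1, y0 + 1, true) := by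
    intro n
    induction n with
    | zero => intro _; simp only [Nat.cast_zero, add_zero]; exact Relation.ReflTransGen.refl
    | succ n ih =>
      intro hn
      push_cast at hn ⊢
      refine Conn.trans ?_ (ih (by omega))
      have t1 := top_free x0 x1 y0 y1 ω (x0 + 1) (y0 + 1 + (n + 1)) (by omega) (by omega)
        (by omega) (by omega) (by omega)
      have t2 := bot_free x0 x1 y0 y1 ω (x0 + 1) (y0 + 1 + (n + 1)) (by omega) (by omega)
        (by omega) (by omega) (by omega)
      have t3 := top_free x0 x1 y0 y1 ω (x0 + 1) (y0 + 1 + (n + 1) - 1) (by omega) (by omega)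
        (by omega) (by omega) (by omega)
      have := (stA t1 t2).trans (conn_symm (stC t3 t2))
      rwa [show y0 + 1 + ((n:ℤ) + 1) - 1 = y0 + 1 + n by ring] at this
  have r := row (x - x0 - 1).toNat (by omega)
  have c := col (y - y0 - 1).toNat (by omega)
  rw [show x0 + 1 + (((x - x0 - 1).toNat : ℕ) : ℤ) = x by omega] at r
  rw [show y0 + 1 + (((y - y0 - 1).toNat : ℕ) : ℤ) = y by omega] at c
  exact r.trans c

lemma inner_conn' (x y : ℤ) (h1 : x0 < x) (h2 : x < x1) (h3 : y0 < y) (h4 : y < y1) :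
    Conn (fill x0 x1 y0 y1 ω) (x, y, false) (x0 + 1, y0 + 1, true) :=
  (conn_symm (stA (top_free _ _ _ _ _ _ _ (by omega) h2 (by omega) h4 (by omega))
    (bot_free _ _ _ _ _ _ _ h1 (by omega) h3 (by omega) (by omega)))).trans
    (inner_conn _ _ _ _ _ _ _ h1 h2 h3 h4)

/-- tops with a noncorner position are connected to the base -/
lemma top_conn (hx : x0 + 3 ≤ x1) (hy : y0 + 3 ≤ y1) (x y : ℤ)
    (h1 : x0 ≤ x) (h2 : x ≤ x1) (h3 : y0 ≤ y) (h4 : y ≤ y1) (hc : ¬ (x = x1 ∧ y = y1))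
    (hd : ¬ (x = x0 ∧ y = y0))
    (hv : (x, y, true) ∈ S1 (fill x0 x1 y0 y1 ω)) :
    Conn (fill x0 x1 y0 y1 ω) (x, y, true) (x0 + 1, y0 + 1, true) := by
  by_cases hx1 : x = x1
  · by_cases hy1 : y + 1 < y1
    · have t2 := bot_free x0 x1 y0 y1 ω x (y + 1) (by omega) (by omega) (by omega)
        (by omega) (by omega)
      have t3 := top_free x0 x1 y0 y1 ω (x - 1) (y + 1) (by omega) (by omega) (by omega)
        (by omega) (by omega)
      exact ((stC' hv t2).trans (conn_symm (stB t3 t2))).trans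
        (inner_conn _ _ _ _ _ _ _ (by omega) (by omega) (by omega) (by omega))
    · have t2 := bot_free x0 x1 y0 y1 ω x y (by omega) (by omega) (by omega)
        (by omega) (by omega)
      have t3 := top_free x0 x1 y0 y1 ω (x - 1) y (by omega) (by omega) (by omega)
        (by omega) (by omega)
      exact ((stA hv t2).trans (conn_symm (stB t3 t2))).trans
        (inner_conn _ _ _ _ _ _ _ (by omega) (by omega) (by omega) (by omega))
  · by_cases hy1 : y = y1
    · by_cases hx2 : x + 1 < x1
      · have t2 := bot_free x0 x1 y0 y1 ω (x + 1) y (by omega) (by omega) (by omega)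
          (by omega) (by omega)
        have t3 := top_free x0 x1 y0 y1 ω (x + 1) (y - 1) (by omega) (by omega) (by omega)
          (by omega) (by omega)
        exact ((stB' hv t2).trans (conn_symm (stC t3 t2))).trans
          (inner_conn _ _ _ _ _ _ _ (by omega) (by omega) (by omega) (by omega))
      · have t2 := bot_free x0 x1 y0 y1 ω x y (by omega) (by omega) (by omega)
          (by omega) (by omega)
        have t3 := top_free x0 x1 y0 y1 ω x (y - 1) (by omega) (by omega) (by omega)
          (by omega) (by omega)
        exact ((stA hv t2).trans (conn_symm (stC t3 t2))).trans
          (inner_conn _ _ _ _ _ _ _ (by omega) (by omega) (by omega) (by omega))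
    · by_cases hx3 : x = x0
      · by_cases hx4 : y + 1 < y1
        · exact (stB' hv (bot_free _ _ _ _ _ _ _ (by omega) (by omega) (by omega)
            (by omega) (by omega))).trans
            (inner_conn' _ _ _ _ _ _ _ (by omega) (by omega) (by omega) (by omega))
        · exact (stB' hv (bot_free _ _ _ _ _ _ _ (by omega) (by omega) (by omega)
            (by omega) (by omega))).trans
            (inner_conn' _ _ _ _ _ _ _ (by omega) (by omega) (by omega) (by omega))
      · by_cases hy3 : y = y0
        · exact (stC' hv (bot_free _ _ _ _ _ _ _ (by omega) (by omega) (by omega)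
            (by omega) (by omega))).trans
            (inner_conn' _ _ _ _ _ _ _ (by omega) (by omega) (by omega) (by omega))
        · exact inner_conn _ _ _ _ _ _ _ (by omega) (by omega) (by omega) (by omega)

lemma bot_conn (hx : x0 + 3 ≤ x1) (hy : y0 + 3 ≤ y1) (x y : ℤ)
    (h1 : x0 ≤ x) (h2 : x ≤ x1) (h3 : y0 ≤ y) (h4 : y ≤ y1) (hc : ¬ (x = x1 ∧ y = y1))
    (hd : ¬ (x = x0 ∧ y = y0))
    (hv : (x, y, false) ∈ S1 (fill x0 x1 y0 y1 ω)) :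
    Conn (fill x0 x1 y0 y1 ω) (x, y, false) (x0 + 1, y0 + 1, true) := by
  have key : ∀ x' y' : ℤ, x0 ≤ x' → x' < x1 → y0 ≤ y' → y' < y1 → ¬ (x' = x0 ∧ y' = y0) →
      HexAdj (x', y', true) (x, y, false) →
      Conn (fill x0 x1 y0 y1 ω) (x, y, false) (x0 + 1, y0 + 1, true) := by
    intro x' y' a1 a2 a3 a4 a5 ha
    have t := top_free x0 x1 y0 y1 ω x' y' a1 a2 a3 a4 a5
    exact (conn_symm (conn_step ha t hv)).trans
      (top_conn _ _ _ _ _ hx hy _ _ a1 a2.le a3 a4.le (by omega) a5 t)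
  have eB : HexAdj (x - 1, y, true) (x, y, false) := by simpa using adjB (x-1) y
  have eC : HexAdj (x, y - 1, true) (x, y, false) := by simpa using adjC x (y-1)
  by_cases q1 : x < x1 ∧ y < y1
  · exact key x y (by omega) (by omega) (by omega) (by omega) (by omega) (adjA x y)
  · by_cases q2 : x = x1
    · by_cases q3 : y = y0
      · exact key (x-1) y (by omega) (by omega) (by omega) (by omega) (by omega) eB
      · exact key (x-1) y (by omega) (by omega) (by omega) (by omega) (by omega) eB
    · by_cases q3 : x = x0
      · exact key x (y-1) (by omega) (by omega) (by omega) (by omega) (by omega) eC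
      · exact key x (y-1) (by omega) (by omega) (by omega) (by omega) (by omega) eC

lemma inR_conn (hx : x0 + 3 ≤ x1) (hy : y0 + 3 ≤ y1)
    (hT : TopE ω x1 y1) (hB : BotE ω x0 y0) (v : HexV) (hR : inR x0 x1 y0 y1 v)
    (hv : v ∈ S1 (fill x0 x1 y0 y1 ω)) :
    Conn (fill x0 x1 y0 y1 ω) v (x0 + 1, y0 + 1, true) := by
  have sub := S_sub_fill x0 x1 y0 y1 ω
  obtain ⟨x, y, t⟩ := v
  simp only [inR, ne_eq, Prod.mk.injEq] at hR
  cases t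
  · simp at hR
    by_cases hc : x = x1 ∧ y = y1
    · obtain ⟨rfl, rfl⟩ := hc
      rcases hT.2 with h | h
      · exact (conn_symm (stB (sub h) hv)).trans
          (top_conn _ _ _ _ _ hx hy _ _ (by omega) (by omega) (by omega) (by omega) (by omega)
            (by omega) (sub h))
      · exact (conn_symm (stC (sub h) hv)).trans
          (top_conn _ _ _ _ _ hx hy _ _ (by omega) (by omega) (by omega) (by omega) (by omega)
            (by omega) (sub h))
    · exact bot_conn _ _ _ _ _ hx hy _ _ (by omega) (by omega) (by omega) (by omega) (by omega)
            (by omega) hv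
  · simp at hR
    by_cases hc : x = x0 ∧ y = y0
    · obtain ⟨rfl, rfl⟩ := hc
      rcases hB.2 with h | h
      · exact (stB' hv (sub h)).trans
          (bot_conn _ _ _ _ _ hx hy _ _ (by omega) (by omega) (by omega) (by omega) (by omega)
            (by omega) (sub h))
      · exact (stC' hv (sub h)).trans
          (bot_conn _ _ _ _ _ hx hy _ _ (by omega) (by omega) (by omega) (by omega) (by omega)
            (by omega) (sub h))
    · exact top_conn _ _ _ _ _ hx hy _ _ (by omega) (by omega) (by omega) (by omega) (by omega)
            (by omega) hv

lemma conn_mono {ω ω' : Config} (h : S1 ω ⊆ S1 ω') {v w : HexV} (hc : Conn ω v w) :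
    Conn ω' v w :=
  by
  unfold Conn at *
  induction hc with
  | refl => exact .refl
  | tail _ h' ih => exact .tail ih ⟨h'.1, h h'.2.1, h h'.2.2⟩

lemma fill_notTwo (hx : x0 + 3 ≤ x1) (hy : y0 + 3 ≤ y1)
    (hT : TopE ω x1 y1) (hB : BotE ω x0 y0) (T : Finset HexV)
    (hTR : ∀ v ∈ T, inR x0 x1 y0 y1 v)
    (hF : ∀ v, InfC ω v → ∃ w, w ∈ T ∧ Conn ω v w) : ¬ TwoC (fill x0 x1 y0 y1 ω) := by
  have sub := S_sub_fill x0 x1 y0 y1 ω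
  have key : ∀ v, InfC (fill x0 x1 y0 y1 ω) v →
      Conn (fill x0 x1 y0 y1 ω) v (x0 + 1, y0 + 1, true) := by
    intro v hv
    have memS : ∀ w, Conn (fill x0 x1 y0 y1 ω) v w → w ∈ S1 (fill x0 x1 y0 y1 ω) := by
      intro w hw
      rcases Relation.ReflTransGen.cases_tail hw with h | ⟨u, _, h⟩
      · subst h
        obtain ⟨u, hu, hc⟩ := hv {w}
        rcases Relation.ReflTransGen.cases_head hc with h | ⟨u', h, _⟩
        · exact absurd h.symm (by simpa using hu)
        · exact h.2.1
      · exact h.2.2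
    by_contra hcon
    have out : ∀ w, Conn (fill x0 x1 y0 y1 ω) v w → ¬ inR x0 x1 y0 y1 w := fun w hw hR =>
      hcon (hw.trans (inR_conn _ _ _ _ _ hx hy hT hB w hR (memS w hw)))
    have back : ∀ w, Conn (fill x0 x1 y0 y1 ω) v w → Conn ω v w := by
      intro w hw
      have hw' := hw
      unfold Conn at hw
      induction hw with
      | refl => exact .refl
      | tail h1 h2 ih =>
        refine Conn.trans (ih h1) (conn_step h2.1 ?_ ?_)
        · exact fill_sub _ _ _ _ _ _ (memS _ h1) (out _ h1)
        · exact fill_sub _ _ _ _ _ _ (memS _ hw') (out _ hw')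
    obtain ⟨w, hw, hc⟩ := hF v (fun T => by
      obtain ⟨w, h, h'⟩ := hv T
      exact ⟨w, h, back w h'⟩)
    exact out w (conn_mono sub hc) (hTR w hw)
  rintro ⟨v, w, hv, hw, hn⟩
  exact hn ((key v hv).trans (conn_symm (key w hw)))

end fill

/-- Finite modification of a configuration. -/
noncomputable def patch (F U : Finset HexE) (ω : Config) : Config := fun e =>
  if e ∈ F then decide (e ∈ U) else ω e

lemma fill_patch (x0 x1 y0 y1 : ℤ) (ω : Config) :
    ∃ F U : Finset HexE, patch F U ω = fill x0 x1 y0 y1 ω := by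
  refine ⟨Finset.Icc x0 x1 ×ˢ Finset.Icc y0 y1 ×ˢ Finset.univ,
    (Finset.Icc x0 x1 ×ˢ Finset.Icc y0 y1 ×ˢ Finset.univ).filter
      fun e => fill x0 x1 y0 y1 ω e = true, ?_⟩
  funext e
  unfold patch
  split_ifs with he
  · simp only [Finset.mem_filter, he, true_and, Bool.decide_eq_true]
  · obtain ⟨x, y, i⟩ := e
    have he' : ¬ (x0 ≤ x ∧ x ≤ x1 ∧ y0 ≤ y ∧ y ≤ y1) := by
      intro q
      exact he (Finset.mem_product.2 ⟨Finset.mem_Icc.2 ⟨q.1, q.2.1⟩,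
        Finset.mem_product.2 ⟨Finset.mem_Icc.2 q.2.2, Finset.mem_univ _⟩⟩)
    clear he
    fin_cases i
    · simp only [Fin.zero_eta]; rw [fillA, if_neg (by omega)]
    · simp only [Fin.mk_one]; rw [fillB, if_neg (by omega)]
    · simp only [Fin.reduceFinMk]; rw [fillC, if_neg (by omega)]

lemma core (ω : Config) (h : IsConfig ω) (hF : FinC ω)
    (hT : ∀ m : ℕ, ∃ x y : ℤ, (m : ℤ) ≤ x ∧ (m : ℤ) ≤ y ∧ TopE ω x y)
    (hB : ∀ m : ℕ, ∃ x y : ℤ, (m : ℤ) ≤ x ∧ (m : ℤ) ≤ y ∧ BotE ω (-x) (-y)) :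
    ∃ F U : Finset HexE, IsConfig (patch F U ω) ∧ ¬ TwoC (patch F U ω) := by
  obtain ⟨T, hTT⟩ := hF
  obtain ⟨m, hm⟩ : ∃ m : ℕ, ∀ v ∈ T, |v.1| < m ∧ |v.2.1| < m := by
    refine ⟨T.sup (fun v => v.1.natAbs + v.2.1.natAbs) + 1, fun v hv => ?_⟩
    have := Finset.le_sup (f := fun v : HexV => v.1.natAbs + v.2.1.natAbs) hv
    constructor <;> rw [Int.abs_eq_natAbs] <;> omega
  obtain ⟨x1, y1, hx1, hy1, hT⟩ := hT (m + 2)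
  obtain ⟨x0, y0, hx0, hy0, hB⟩ := hB (m + 2)
  push_cast at hx1 hy1 hx0 hy0
  have hc := fill_isConfig (-x0) x1 (-y0) y1 ω h (by omega) (by omega) hT hB
  have h2 := fill_notTwo (-x0) x1 (-y0) y1 ω (by omega) (by omega) hT hB T (by
    intro v hv
    have := hm v hv
    simp only [abs_lt] at this
    refine ⟨by omega, by omega, by omega, by omega, ?_, ?_⟩
    · rintro rfl; simp at this; omega
    · rintro rfl; simp at this; omega) hTT
  obtain ⟨F, U, hFU⟩ := fill_patch (-x0) x1 (-y0) y1 ω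
  refine ⟨F, U, ?_, ?_⟩
  · rw [hFU]; exact hc
  · rw [hFU]; exact h2

/-! ## Measurability -/

lemma meas_edge (e : HexE) (b : Bool) : MeasurableSet {ω : Config | ω e = b} :=
  measurableSet_eq_fun (measurable_pi_apply e) measurable_const

lemma meas_localConf (v : HexV) : Measurable fun ω : Config => localConf ω v :=
  measurable_pi_lambda _ fun i => measurable_pi_apply (edgesAt v i)

lemma meas_S (v : HexV) : MeasurableSet {ω : Config | v ∈ S1 ω} :=
  meas_localConf v (measurableSet_singleton conf001)

lemma meas_isConfig : MeasurableSet {ω : Config | IsConfig ω} := by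
  unfold IsConfig
  rw [Set.ofPred_forall]
  refine MeasurableSet.iInter fun v => ?_
  exact meas_localConf v (t := {f : Fin 3 → Bool |
    1 ≤ (Finset.univ.filter fun i : Fin 3 => f i = true).card ∧
    (Finset.univ.filter fun i : Fin 3 => f i = true).card ≤ 2}) (Set.toFinite _).measurableSet

def Rn : ℕ → Config → HexV → HexV → Prop
  | 0, _, v, w => v = w
  | n + 1, ω, v, w => ∃ u, Rn n ω v u ∧ adjIn (S1 ω) u w

lemma conn_iff_Rn (ω : Config) (v w : HexV) : Conn ω v w ↔ ∃ n, Rn n ω v w := by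
  constructor
  · intro h
    unfold Conn at h
    induction h with
    | refl => exact ⟨0, rfl⟩
    | tail _ h ih =>
      obtain ⟨n, hn⟩ := ih
      exact ⟨n + 1, _, hn, h⟩
  · rintro ⟨n, hn⟩
    induction n generalizing w with
    | zero => cases hn; exact Relation.ReflTransGen.refl
    | succ n ih =>
      obtain ⟨u, h1, h2⟩ := hn
      exact Relation.ReflTransGen.tail (ih u h1) h2

lemma meas_adjIn (v w : HexV) : MeasurableSet {ω : Config | adjIn (S1 ω) v w} :=
  (MeasurableSet.const _).inter ((meas_S v).inter (meas_S w))

lemma meas_Rn (n : ℕ) (v w : HexV) : MeasurableSet {ω : Config | Rn n ω v w} := by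
  induction n generalizing w with
  | zero => exact MeasurableSet.const _
  | succ n ih =>
    simp only [Rn]
    rw [Set.ofPred_exists]
    exact MeasurableSet.iUnion fun u => (ih u).inter (meas_adjIn u w)

lemma meas_conn (v w : HexV) : MeasurableSet {ω : Config | Conn ω v w} := by
  simp only [conn_iff_Rn]
  rw [Set.ofPred_exists]
  exact MeasurableSet.iUnion fun n => meas_Rn n v w

lemma meas_infC (v : HexV) : MeasurableSet {ω : Config | InfC ω v} := by
  unfold InfC
  rw [Set.ofPred_forall]
  refine MeasurableSet.iInter fun T => ?_
  rw [Set.ofPred_exists]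
  exact MeasurableSet.iUnion fun w => (MeasurableSet.const _).inter (meas_conn v w)

lemma meas_twoC : MeasurableSet {ω : Config | TwoC ω} := by
  unfold TwoC
  rw [Set.ofPred_exists]
  refine MeasurableSet.iUnion fun v => ?_
  rw [Set.ofPred_exists]
  exact MeasurableSet.iUnion fun w =>
    (meas_infC v).inter ((meas_infC w).inter (meas_conn v w).compl)

lemma meas_finC : MeasurableSet {ω : Config | FinC ω} := by
  unfold FinC
  rw [Set.ofPred_exists]
  refine MeasurableSet.iUnion fun T => ?_
  rw [Set.ofPred_forall]
  refine MeasurableSet.iInter fun v => ?_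
  have : {ω : Config | InfC ω v → ∃ w, w ∈ T ∧ Conn ω v w} =
      {ω : Config | InfC ω v}ᶜ ∪ ⋃ w, {ω : Config | w ∈ T ∧ Conn ω v w} := by
    ext ω
    simp only [Set.mem_ofPred_eq, Set.mem_union, Set.mem_compl_iff, Set.mem_iUnion]
    tauto
  rw [this]
  exact (meas_infC v).compl.union
    (MeasurableSet.iUnion fun w => (MeasurableSet.const _).inter (meas_conn v w))

lemma meas_topE (x y : ℤ) : MeasurableSet {ω : Config | TopE ω x y} :=
  (meas_S _).inter ((meas_S _).union (meas_S _))

lemma meas_botE (x y : ℤ) : MeasurableSet {ω : Config | BotE ω x y} :=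
  (meas_S _).inter ((meas_S _).union (meas_S _))

lemma meas_shift (g : ℤ × ℤ) : Measurable (shiftConfig g) :=
  measurable_pi_lambda _ fun e => measurable_pi_apply (shiftE g e)

/-! ## Shift covariance -/

def shiftV (g : ℤ × ℤ) (v : HexV) : HexV := (v.1 + g.1, v.2.1 + g.2, v.2.2)

lemma edgesAt_shift (g : ℤ × ℤ) (v : HexV) (i : Fin 3) :
    edgesAt (shiftV g v) i = shiftE g (edgesAt v i) := by
  obtain ⟨x, y, t⟩ := v
  cases t <;> simp only [edgesAt, shiftV, shiftE] <;> split_ifs <;>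
    simp_all <;> ring

lemma S_shift (g : ℤ × ℤ) (ω : Config) (v : HexV) :
    v ∈ S1 (shiftConfig g ω) ↔ shiftV g v ∈ S1 ω := by
  simp only [confSet, Set.mem_ofPred_eq, localConf, shiftConfig, funext_iff, edgesAt_shift]

lemma shiftV_inj (g : ℤ × ℤ) {v w : HexV} (h : shiftV g v = shiftV g w) : v = w := by
  obtain ⟨x, y, t⟩ := v
  obtain ⟨x', y', t'⟩ := w
  simpa [shiftV] using h

lemma end1_shift (g : ℤ × ℤ) (e : HexE) : end1 (shiftE g e) = shiftV g (end1 e) := rfl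

lemma end2_shift (g : ℤ × ℤ) (e : HexE) : end2 (shiftE g e) = shiftV g (end2 e) := by
  obtain ⟨x, y, i⟩ := e
  fin_cases i <;> simp [end2, shiftE, shiftV] <;> ring

lemma hexAdj_shift (g : ℤ × ℤ) {v w : HexV} (h : HexAdj v w) :
    HexAdj (shiftV g v) (shiftV g w) := by
  obtain ⟨h1, e, h2, h3⟩ := h
  refine ⟨fun h => h1 (shiftV_inj g h), shiftE g e, ?_, ?_⟩
  · rw [end1_shift, end2_shift]
    exact h2.imp (congrArg _) (congrArg _)
  · rw [end1_shift, end2_shift]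
    exact h3.imp (congrArg _) (congrArg _)

lemma conn_shift1 (g : ℤ × ℤ) (ω : Config) (v w : HexV) (h : Conn (shiftConfig g ω) v w) :
    Conn ω (shiftV g v) (shiftV g w) := by
  unfold Conn at *
  induction h with
  | refl => exact .refl
  | tail _ h ih =>
    exact .tail ih ⟨hexAdj_shift g h.1, (S_shift _ _ _).1 h.2.1, (S_shift _ _ _).1 h.2.2⟩

lemma shift_neg (g : ℤ × ℤ) (ω : Config) : shiftConfig (-g) (shiftConfig g ω) = ω := by
  funext e
  simp [shiftConfig, shiftE]

lemma shiftV_neg (g : ℤ × ℤ) (v : HexV) : shiftV (-g) (shiftV g v) = v := by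
  simp [shiftV]

lemma shiftV_neg' (g : ℤ × ℤ) (v : HexV) : shiftV g (shiftV (-g) v) = v := by
  simp [shiftV]

lemma conn_shift (g : ℤ × ℤ) (ω : Config) (v w : HexV) : Conn (shiftConfig g ω) v w ↔
    Conn ω (shiftV g v) (shiftV g w) := by
  refine ⟨conn_shift1 g ω v w, fun h => ?_⟩
  have := conn_shift1 (-g) (shiftConfig g ω) (shiftV g v) (shiftV g w) (by rwa [shift_neg])
  rwa [shiftV_neg, shiftV_neg] at this

lemma infC_shift (g : ℤ × ℤ) (ω : Config) (v : HexV) :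
    InfC (shiftConfig g ω) v ↔ InfC ω (shiftV g v) := by
  classical
  constructor
  · intro h T
    obtain ⟨w, hw, hc⟩ := h (T.image (shiftV (-g)))
    refine ⟨shiftV g w, fun hT => hw ?_, (conn_shift _ _ _ _).1 hc⟩
    exact Finset.mem_image.2 ⟨_, hT, shiftV_neg _ _⟩
  · intro h T
    obtain ⟨w, hw, hc⟩ := h (T.image (shiftV g))
    refine ⟨shiftV (-g) w, fun hT => hw ?_, (conn_shift _ _ _ _).2 ?_⟩
    · exact Finset.mem_image.2 ⟨_, hT, shiftV_neg' _ _⟩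
    · rwa [shiftV_neg']

lemma twoC_shift1 (g : ℤ × ℤ) (ω : Config) (h : TwoC (shiftConfig g ω)) : TwoC ω := by
  obtain ⟨v, w, h1, h2, h3⟩ := h
  exact ⟨shiftV g v, shiftV g w, (infC_shift _ _ _).1 h1, (infC_shift _ _ _).1 h2,
    fun h => h3 ((conn_shift _ _ _ _).2 h)⟩

lemma finC_shift1 (g : ℤ × ℤ) (ω : Config) (h : FinC (shiftConfig g ω)) : FinC ω := by
  classical
  obtain ⟨T, hT⟩ := h
  refine ⟨T.image (shiftV g), fun v hv => ?_⟩
  obtain ⟨w, hw, hc⟩ := hT (shiftV (-g) v) ((infC_shift _ _ _).2 (by rwa [shiftV_neg']))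
  refine ⟨shiftV g w, Finset.mem_image_of_mem _ hw, ?_⟩
  have := (conn_shift _ _ _ _).1 hc
  rwa [shiftV_neg'] at this

def Bad : Set Config := {ω | FinC ω ∧ TwoC ω}

lemma meas_bad : MeasurableSet Bad := meas_finC.inter meas_twoC

lemma bad_shift (g : ℤ × ℤ) : shiftConfig g ⁻¹' Bad = Bad := by
  ext ω
  constructor
  · rintro ⟨h1, h2⟩
    exact ⟨finC_shift1 g ω h1, twoC_shift1 g ω h2⟩
  · rintro ⟨h1, h2⟩
    rw [← shift_neg g ω] at h1 h2
    exact ⟨finC_shift1 _ _ h1, twoC_shift1 _ _ h2⟩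

/-! ## From the number of clusters -/

lemma infC_mem {ω : Config} {v : HexV} (hv : InfC ω v) : v ∈ S1 ω := by
  obtain ⟨u, hu, hc⟩ := hv {v}
  rcases Relation.ReflTransGen.cases_head hc with h | ⟨u', h, _⟩
  · exact absurd h.symm (by simpa using hu)
  · exact h.2.1

lemma compOf_eq {ω : Config} {v w : HexV} (h : Conn ω v w) :
    compOf (S1 ω) v = compOf (S1 ω) w := by
  ext u
  exact ⟨fun h' => (conn_symm h).trans h', fun h' => h.trans h'⟩

lemma num_bad (ω : Config) (k : ℕ) (hk : 1 < k) (h : numInfClusters ω conf001 = (k : ℕ∞)) :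
    ω ∈ Bad := by
  classical
  unfold numInfClusters at h
  set 𝒞 : Set (Set HexV) := {C | IsCluster ω conf001 C ∧ C.Infinite} with h𝒞
  have hfin : 𝒞.Finite := Set.finite_of_encard_eq_coe h
  have hv : ∀ v, InfC ω v → compOf (S1 ω) v ∈ 𝒞 := fun v hv =>
    ⟨⟨v, infC_mem hv, rfl⟩, (infC_iff ω v).1 hv⟩
  constructor
  · have : ∀ C : Set HexV, ∃ v, C.Nonempty → v ∈ C := by
      intro C
      by_cases hC : C.Nonempty
      · exact ⟨hC.some, fun _ => hC.some_mem⟩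
      · exact ⟨(0, 0, true), fun h => absurd h hC⟩
    choose f hf using this
    refine ⟨hfin.toFinset.image f, fun v hvv => ⟨f (compOf (S1 ω) v), ?_, ?_⟩⟩
    · exact Finset.mem_image_of_mem _ (hfin.mem_toFinset.2 (hv v hvv))
    · exact hf (compOf (S1 ω) v) ⟨v, Relation.ReflTransGen.refl⟩
  · have h1 : 1 < 𝒞.encard := by rw [h]; exact_mod_cast hk
    obtain ⟨C, D, hC, hD, hne⟩ := Set.one_lt_encard_iff.1 h1
    obtain ⟨⟨v, hvS, rfl⟩, hvi⟩ := hC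
    obtain ⟨⟨w, hwS, rfl⟩, hwi⟩ := hD
    exact ⟨v, w, (infC_iff _ _).2 hvi, (infC_iff _ _).2 hwi, fun h => hne (compOf_eq h)⟩

/-! ## Recurrence -/

lemma shift_shift (g h : ℤ × ℤ) (ω : Config) :
    shiftConfig g (shiftConfig h ω) = shiftConfig (g + h) ω := by
  funext e
  simp [shiftConfig, shiftE, add_assoc]

lemma topE_shift (g : ℤ × ℤ) (ω : Config) :
    TopE (shiftConfig g ω) 0 0 ↔ TopE ω g.1 g.2 := by
  unfold TopE
  rw [S_shift, S_shift, S_shift]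
  simp [shiftV, sub_eq_neg_add]

lemma botE_shift (g : ℤ × ℤ) (ω : Config) :
    BotE (shiftConfig g ω) 0 0 ↔ BotE ω g.1 g.2 := by
  unfold BotE
  rw [S_shift, S_shift, S_shift]
  simp [shiftV, add_comm]

lemma adj_step {S : Set HexV} {u w : HexV} (h : adjIn S u w) :
    (u.1 = w.1 ∧ u.2.1 = w.2.1) ∨
    ∃ x y : ℤ, (x, y, true) ∈ S ∧ ((x + 1, y, false) ∈ S ∨ (x, y + 1, false) ∈ S) := by
  obtain ⟨⟨hne, ⟨x, y, i⟩, h1, h2⟩, hu, hw⟩ := h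
  have key : ∀ p q : HexV, p = end1 (x, y, i) → q = end2 (x, y, i) → p ∈ S → q ∈ S →
      (p.1 = q.1 ∧ p.2.1 = q.2.1) ∨
      ∃ x y : ℤ, (x, y, true) ∈ S ∧ ((x + 1, y, false) ∈ S ∨ (x, y + 1, false) ∈ S) := by
    rintro p q rfl rfl hp hq
    simp only [end1] at hp
    fin_cases i
    · left; simp [end1, end2]
    · right; exact ⟨x, y, hp, Or.inl (by simpa [end2] using hq)⟩
    · right; exact ⟨x, y, hp, Or.inr (by simpa [end2] using hq)⟩
  rcases h1 with h1 | h1 <;> rcases h2 with h2 | h2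
  · exact absurd (h1.trans h2.symm) hne
  · exact key u w h1 h2 hu hw
  · refine (key w u h2 h1 hw hu).imp (fun h => ⟨h.1.symm, h.2.symm⟩) id
  · exact absurd (h1.trans h2.symm) hne

lemma inf_edge {ω : Config} {v : HexV} (hv : InfC ω v) :
    ∃ x y : ℤ, (x, y, true) ∈ S1 ω ∧ ((x + 1, y, false) ∈ S1 ω ∨ (x, y + 1, false) ∈ S1 ω) := by
  by_contra hcon
  have key : ∀ w, Conn ω v w → v.1 = w.1 ∧ v.2.1 = w.2.1 := by
    intro w hw
    unfold Conn at hw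
    induction hw with
    | refl => exact ⟨rfl, rfl⟩
    | tail _ h ih =>
      rcases adj_step h with h' | h'
      · exact ⟨ih.1.trans h'.1, ih.2.trans h'.2⟩
      · exact absurd h' hcon
  obtain ⟨⟨x, y, t⟩, hw, hc⟩ := hv {(v.1, v.2.1, true), (v.1, v.2.1, false)}
  obtain ⟨h1, h2⟩ := key _ hc
  apply hw
  cases t <;> simp_all

lemma inf_top {ω : Config} (h : TwoC ω) : ∃ x y, TopE ω x y := by
  obtain ⟨v, _, hv, _⟩ := h
  obtain ⟨x, y, h1, h2 | h2⟩ := inf_edge hv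
  · exact ⟨x + 1, y, h2, Or.inl (by simpa using h1)⟩
  · exact ⟨x, y + 1, h2, Or.inr (by simpa using h1)⟩

lemma inf_bot {ω : Config} (h : TwoC ω) : ∃ x y, BotE ω x y := by
  obtain ⟨v, _, hv, _⟩ := h
  obtain ⟨x, y, h1⟩ := inf_edge hv
  exact ⟨x, y, h1⟩

lemma recur (μ : Measure Config) [IsProbabilityMeasure μ] (hTI : TransInvariant μ)
    (D : Set Config) (hD : MeasurableSet D) (s : ℤ) (hs : s = 1 ∨ s = -1)
    (hZ : μ {ω | ∀ x y : ℤ, shiftConfig (x, y) ω ∉ D} = 0) (m : ℤ) :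
    μ {ω | ∀ x y : ℤ, m ≤ x → m ≤ y → shiftConfig (s * x, s * y) ω ∉ D} = 0 := by
  set Q : ℤ → Set Config :=
    fun m => {ω | ∀ x y : ℤ, m ≤ x → m ≤ y → shiftConfig (s * x, s * y) ω ∉ D} with hQ
  have measQ : ∀ m, MeasurableSet (Q m) := by
    intro m
    simp only [hQ, Set.ofPred_forall]
    exact MeasurableSet.iInter fun x => MeasurableSet.iInter fun y => MeasurableSet.iInter fun _ =>
      MeasurableSet.iInter fun _ => meas_shift _ hD.compl
  have hshift : ∀ m j : ℤ, μ (Q (m + j)) = μ (Q m) := by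
    intro m j
    have : shiftConfig (s * j, s * j) ⁻¹' (Q m) = Q (m + j) := by
      ext ω
      simp only [hQ, Set.mem_preimage, Set.mem_ofPred_eq, shift_shift, Prod.mk_add_mk, ← mul_add]
      constructor
      · intro h x y hx hy
        have := h (x - j) (y - j) (by omega) (by omega)
        simpa using this
      · intro h x y hx hy
        exact h (x + j) (y + j) (by omega) (by omega)
    rw [← this, ← Measure.map_apply (meas_shift _) (measQ m), hTI]
  have hanti : Antitone fun n : ℕ => Q (-(n : ℤ)) := by
    intro n n' h ω hω x y hx hy
    exact hω x y (by omega) (by omega)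
  have hI : ⋂ n : ℕ, Q (-(n : ℤ)) = {ω | ∀ x y : ℤ, shiftConfig (x, y) ω ∉ D} := by
    ext ω
    simp only [Set.mem_iInter, hQ, Set.mem_ofPred_eq]
    constructor
    · intro h x y
      have := h ((s * x).natAbs + (s * y).natAbs) (s * x) (s * y) (by omega) (by omega)
      rcases hs with rfl | rfl <;> simpa using this
    · intro h n x y _ _
      exact h _ _
  have ht := tendsto_measure_iInter_atTop (μ := μ) (s := fun n : ℕ => Q (-(n : ℤ)))
    (fun n => (measQ _).nullMeasurableSet) hanti ⟨0, measure_ne_top _ _⟩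
  rw [hI, hZ] at ht
  have hc : ∀ n : ℕ, (μ ∘ fun n : ℕ => Q (-(n : ℤ))) n = μ (Q m) := by
    intro n
    have := hshift m (-m - n)
    simp only [Function.comp]
    rw [← this]; congr 2; ring
  rw [show (μ ∘ fun n : ℕ => Q (-(n : ℤ))) = fun _ => μ (Q m) from funext hc] at ht
  exact tendsto_nhds_unique tendsto_const_nhds ht

lemma ae_top (μ : Measure Config) [IsProbabilityMeasure μ] (hTI : TransInvariant μ)
    (hB : ∀ᵐ ω ∂μ, TwoC ω) :
    ∀ᵐ ω ∂μ, ∀ m : ℕ, ∃ x y : ℤ, (m : ℤ) ≤ x ∧ (m : ℤ) ≤ y ∧ TopE ω x y := by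
  rw [ae_all_iff]
  intro m
  have := recur μ hTI {ω | TopE ω 0 0} (meas_topE 0 0) 1 (Or.inl rfl) (by
    refine measure_mono_null ?_ hB
    intro ω hω h
    obtain ⟨x, y, hxy⟩ := inf_top h
    exact hω x y ((topE_shift (x, y) ω).2 hxy)) m
  refine measure_mono_null ?_ this
  intro ω hω x y hx hy ht
  refine hω ⟨x, y, hx, hy, ?_⟩
  simpa using (topE_shift _ ω).1 ht

lemma ae_bot (μ : Measure Config) [IsProbabilityMeasure μ] (hTI : TransInvariant μ)
    (hB : ∀ᵐ ω ∂μ, TwoC ω) :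
    ∀ᵐ ω ∂μ, ∀ m : ℕ, ∃ x y : ℤ, (m : ℤ) ≤ x ∧ (m : ℤ) ≤ y ∧ BotE ω (-x) (-y) := by
  rw [ae_all_iff]
  intro m
  have := recur μ hTI {ω | BotE ω 0 0} (meas_botE 0 0) (-1) (Or.inr rfl) (by
    refine measure_mono_null ?_ hB
    intro ω hω h
    obtain ⟨x, y, hxy⟩ := inf_bot h
    exact hω x y ((botE_shift (x, y) ω).2 hxy)) m
  refine measure_mono_null ?_ this
  intro ω hω x y hx hy ht
  refine hω ⟨x, y, hx, hy, ?_⟩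
  simpa using (botE_shift _ ω).1 ht

/-! ## Finite energy -/

abbrev HH (G : Finset HexE) : Set HexE := ↑G ∪ edgeNbhd G

lemma HH_mono {F G : Finset HexE} (h : F ⊆ G) : HH F ⊆ HH G := by
  rintro e (he | ⟨e', h1, h2⟩)
  · exact Or.inl (h he)
  · exact Or.inr ⟨e', h h1, h2⟩

lemma HH_union (F G : Finset HexE) : HH (F ∪ G) = HH F ∪ HH G := by
  classical
  apply Set.Subset.antisymm
  · rintro e (he | ⟨e', h1, h2⟩)
    · rcases Finset.mem_union.1 he with h | h
      · exact Or.inl (Or.inl h)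
      · exact Or.inr (Or.inl h)
    · rcases Finset.mem_union.1 h1 with h | h
      · exact Or.inl (Or.inr ⟨e', h, h2⟩)
      · exact Or.inr (Or.inr ⟨e', h, h2⟩)
  · exact Set.union_subset (HH_mono Finset.subset_union_left) (HH_mono Finset.subset_union_right)

lemma edgesAt_end1 (e : HexE) : edgesAt (end1 e) e.2.2 = e := by
  simp [edgesAt, end1]

lemma edgesAt_end2 (e : HexE) : edgesAt (end2 e) e.2.2 = e := by
  obtain ⟨x, y, i⟩ := e
  fin_cases i <;> simp [edgesAt, end2]

lemma end_edgesAt (v : HexV) (i : Fin 3) : end1 (edgesAt v i) = v ∨ end2 (edgesAt v i) = v := by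
  obtain ⟨x, y, t⟩ := v
  cases t <;> fin_cases i <;> simp [edgesAt, end1, end2]

lemma mem_verts {F : Finset HexE} {v : HexV} :
    v ∈ verts F ↔ ∃ e ∈ F, v = end1 e ∨ v = end2 e := by
  simp [verts, endsFinset]

lemma verts_mono {F G : Finset HexE} (h : F ⊆ G) : verts F ⊆ verts G :=
  Finset.biUnion_subset_biUnion_of_subset_left _ h

lemma edge_mem_HH {F : Finset HexE} {v : HexV} (hv : v ∈ verts F) (i : Fin 3) :
    edgesAt v i ∈ HH F := by
  obtain ⟨e, he, h⟩ := mem_verts.1 hv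
  refine Or.inr ⟨e, he, ?_⟩
  rcases end_edgesAt v i with h' | h' <;> rw [h'] <;> rcases h with rfl | rfl <;> simp

lemma edge_notMem {F : Finset HexE} {v : HexV} (hv : v ∉ verts F) (i : Fin 3) :
    edgesAt v i ∉ F := by
  intro h
  refine hv (mem_verts.2 ⟨_, h, ?_⟩)
  rcases end_edgesAt v i with h' | h' <;> simp [h']

lemma HH_finite (G : Finset HexE) : (HH G).Finite := by
  classical
  refine Set.Finite.subset (Finset.finite_toSet
    ((verts G ×ˢ (Finset.univ : Finset (Fin 3))).image fun p => edgesAt p.1 p.2)) ?_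
  intro e he
  have : end1 e ∈ verts G ∨ end2 e ∈ verts G := by
    simp only [mem_verts]
    rcases he with he | ⟨e', h1, h | h | h | h⟩
    · exact Or.inl ⟨e, he, Or.inl rfl⟩
    · exact Or.inl ⟨e', h1, Or.inl h.symm⟩
    · exact Or.inr ⟨e', h1, Or.inl h.symm⟩
    · exact Or.inl ⟨e', h1, Or.inr h.symm⟩
    · exact Or.inr ⟨e', h1, Or.inr h.symm⟩
  rw [Finset.mem_coe, Finset.mem_image]
  rcases this with h | h
  · exact ⟨(end1 e, e.2.2), Finset.mem_product.2 ⟨h, Finset.mem_univ _⟩, edgesAt_end1 e⟩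
  · exact ⟨(end2 e, e.2.2), Finset.mem_product.2 ⟨h, Finset.mem_univ _⟩, edgesAt_end2 e⟩

lemma meas_cyl (S : Set HexE) (σ : Config) : MeasurableSet (cyl S σ) := by
  unfold cyl
  simp only [Set.ofPred_forall]
  exact MeasurableSet.iInter fun e => MeasurableSet.iInter fun _ => meas_edge e _

lemma meas_patch (F U : Finset HexE) : Measurable (patch F U) := by
  refine measurable_pi_lambda _ fun e => ?_
  unfold patch
  by_cases h : e ∈ F
  · simp only [h, if_true]; exact measurable_const
  · simp only [h, if_false]; exact measurable_pi_apply e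

lemma localConf_congr {S : Set HexE} {α β : Config} (h : ∀ e ∈ S, α e = β e) {v : HexV}
    (hv : ∀ i, edgesAt v i ∈ S) : localConf α v = localConf β v :=
  funext fun i => h _ (hv i)

lemma localConf_in {F : Finset HexE} {α β : Config} (h : ∀ e ∈ HH F, α e = β e) {v : HexV}
    (hv : v ∈ verts F) : localConf α v = localConf β v :=
  localConf_congr h fun i => edge_mem_HH hv i

lemma localConf_out {F : Finset HexE} {α β : Config} (h : ∀ e, e ∉ F → α e = β e) {v : HexV}
    (hv : v ∉ verts F) : localConf α v = localConf β v :=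
  localConf_congr (S := {e | e ∉ F}) h fun i => edge_notMem hv i

/-- gluing of valid configurations -/
lemma isConfig_glue {F : Finset HexE} {α β γ : Config} (hβ : IsConfig β) (hγ : IsConfig γ)
    (h1 : ∀ e ∈ HH F, α e = β e) (h2 : ∀ e, e ∉ F → α e = γ e) : IsConfig α := by
  intro v
  by_cases hv : v ∈ verts F
  · rw [localConf_in h1 hv]; exact hβ v
  · rw [localConf_out h2 hv]; exact hγ v

lemma weight_pos {a b c : ℝ} (ha : 0 < a) (hb : 0 < b) (hc : 0 < c) {ω : Config}
    (h : IsConfig ω) (v : HexV) : 0 < weight a b c (localConf ω v) := by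
  have := h v
  rw [card_cond] at this
  unfold weight
  generalize localConf ω v = f at *
  rcases h0 : f 0 <;> rcases h1 : f 1 <;> rcases h2 : f 2 <;> simp_all

noncomputable def WW (a b c : ℝ) (F : Finset HexE) (ω : Config) : ENNReal :=
  ENNReal.ofReal (∏ v ∈ verts F, weight a b c (localConf ω v))

lemma WW_congr {a b c : ℝ} {F : Finset HexE} {α β : Config} (h : ∀ e ∈ HH F, α e = β e) :
    WW a b c F α = WW a b c F β := by
  unfold WW
  rw [Finset.prod_congr rfl fun v hv => by rw [localConf_in h hv]]

lemma WW_ne_zero {a b c : ℝ} (ha : 0 < a) (hb : 0 < b) (hc : 0 < c) {F : Finset HexE}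
    {ω : Config} (h : IsConfig ω) : WW a b c F ω ≠ 0 := by
  unfold WW
  rw [ne_eq, ENNReal.ofReal_eq_zero, not_le]
  exact Finset.prod_pos fun v _ => weight_pos ha hb hc h v

lemma gibbs_step {a b c : ℝ} (ha : 0 < a) (hb : 0 < b) (hc : 0 < c)
    {μ : Measure Config} (hG : IsGibbs a b c μ) {F G : Finset HexE} (hFG : F ⊆ G)
    {α β : Config} (hα : IsConfig α) (hβ : IsConfig β) (h : ∀ e, e ∉ F → α e = β e) :
    μ (cyl (HH G) α) * WW a b c F β = μ (cyl (HH G) β) * WW a b c F α := by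
  classical
  have hg := hG.2.2 G α β hα hβ (fun e he => h e fun h' => he (hFG h'))
  have split : ∀ ω : Config, IsConfig ω →
      ENNReal.ofReal (∏ v ∈ verts G, weight a b c (localConf ω v)) = WW a b c F ω *
        ENNReal.ofReal (∏ v ∈ verts G \ verts F, weight a b c (localConf ω v)) := by
    intro ω hω
    unfold WW
    rw [← ENNReal.ofReal_mul (Finset.prod_nonneg fun v _ => (weight_pos ha hb hc hω v).le),
      mul_comm (∏ v ∈ verts F, _), Finset.prod_sdiff (verts_mono hFG)]
  have same : ∏ v ∈ verts G \ verts F, weight a b c (localConf α v) =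
      ∏ v ∈ verts G \ verts F, weight a b c (localConf β v) :=
    Finset.prod_congr rfl fun v hv => by
      rw [localConf_out h (Finset.mem_sdiff.1 hv).2]
  rw [split α hα, split β hβ, same, ← mul_assoc, ← mul_assoc] at hg
  refine (ENNReal.mul_left_inj ?_ ENNReal.ofReal_ne_top).1 hg
  rw [ne_eq, ENNReal.ofReal_eq_zero, not_le]
  exact Finset.prod_pos fun v _ => weight_pos ha hb hc hβ v

noncomputable def ind (T : Finset HexE) : Config := fun e => decide (e ∈ T)

lemma exists_ind (G : Finset HexE) (ω : Config) : ∃ T : Finset HexE, ω ∈ cyl (HH G) (ind T) := by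
  classical
  refine ⟨(HH_finite G).toFinset.filter fun e => ω e = true, fun e he => ?_⟩
  simp only [ind, Finset.mem_filter, (HH_finite G).mem_toFinset, he, true_and,
    Bool.decide_eq_true]

def PiS (F : Finset HexE) : Set (Set Config) := {s | ∃ G ζ, F ⊆ G ∧ s = cyl (HH G) ζ}

lemma PiS_pi (F : Finset HexE) : IsPiSystem (PiS F) := by
  classical
  rintro _ ⟨G, ζ, hG, rfl⟩ _ ⟨G', ζ', hG', rfl⟩ ⟨ω, h1, h2⟩
  refine ⟨G ∪ G', ω, hG.trans Finset.subset_union_left, ?_⟩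
  rw [HH_union]
  ext ω'
  constructor
  · rintro ⟨h3, h4⟩ e (he | he)
    · rw [h3 e he, h1 e he]
    · rw [h4 e he, h2 e he]
  · intro h
    exact ⟨fun e he => by rw [h e (Or.inl he), h1 e he],
      fun e he => by rw [h e (Or.inr he), h2 e he]⟩

lemma PiS_gen (F : Finset HexE) :
    (MeasurableSpace.pi : MeasurableSpace Config) = MeasurableSpace.generateFrom (PiS F) := by
  classical
  apply le_antisymm
  · refine iSup_le fun e => ?_
    rw [← measurable_iff_comap_le]
    refine @measurable_to_bool _ (MeasurableSpace.generateFrom (PiS F)) _ ?_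
    have : (fun ω : Config => ω e) ⁻¹' {true} =
        ⋃ T : Finset HexE, ⋃ _ : e ∈ T, cyl (HH (insert e F)) (ind T) := by
      ext ω
      have heH : e ∈ HH (insert e F) := Or.inl (by simp)
      simp only [Set.mem_preimage, Set.mem_singleton_iff, Set.mem_iUnion, exists_prop]
      constructor
      · intro h
        obtain ⟨T, hT⟩ := exists_ind (insert e F) ω
        refine ⟨T, ?_, hT⟩
        have := hT e heH
        rw [h] at this
        simpa [ind] using this.symm
      · rintro ⟨T, h1, h2⟩
        rw [h2 e heH]
        simpa [ind] using h1
    rw [this]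
    refine @MeasurableSet.iUnion _ _ (MeasurableSpace.generateFrom (PiS F)) _ _ fun T =>
      @MeasurableSet.iUnion _ _ (MeasurableSpace.generateFrom (PiS F)) _ _ fun _ =>
      MeasurableSpace.measurableSet_generateFrom ⟨_, _, Finset.subset_insert _ _, rfl⟩
  · refine MeasurableSpace.generateFrom_le ?_
    rintro _ ⟨G, ζ, _, rfl⟩
    exact meas_cyl _ _

lemma patch_congr {F U : Finset HexE} {S : Set HexE} {α β : Config} (h : ∀ e ∈ S, α e = β e) :
    ∀ e ∈ S, patch F U α e = patch F U β e := by
  intro e he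
  unfold patch
  rw [h e he]

lemma patch_out {F U : Finset HexE} {ω : Config} : ∀ e, e ∉ F → patch F U ω e = ω e := by
  intro e he
  simp [patch, he]

lemma quasi {a b c : ℝ} (ha : 0 < a) (hb : 0 < b) (hc : 0 < c)
    {μ : Measure Config} (hG : IsGibbs a b c μ) (F U : Finset HexE) (σ : Config)
    (hσ : IsConfig σ) (hpσ : IsConfig (patch F U σ)) :
    WW a b c F (patch F U σ) • (μ.restrict (cyl (HH F) σ)).map (patch F U) =
      WW a b c F σ • μ.restrict (cyl (HH F) (patch F U σ)) := by
  classical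
  have := hG.1
  have hFH : ∀ e, e ∈ F → e ∈ HH F := fun e he => Or.inl he
  have : IsFiniteMeasure (WW a b c F (patch F U σ) •
      (μ.restrict (cyl (HH F) σ)).map (patch F U)) :=
    Measure.smul_finite _ ENNReal.ofReal_ne_top
  have hnull : μ {ω | IsConfig ω}ᶜ = 0 := by
    rw [prob_compl_eq_zero_iff meas_isConfig]; exact hG.2.1
  refine ext_of_generate_finite (PiS F) (PiS_gen F) (PiS_pi F) ?_ ?_
  · rintro _ ⟨G, ζ, hFG, rfl⟩
    rw [Measure.smul_apply, Measure.smul_apply, Measure.map_apply (meas_patch F U) (meas_cyl _ _),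
      Measure.restrict_apply (meas_patch F U (meas_cyl _ _)), Measure.restrict_apply (meas_cyl _ _),
      smul_eq_mul, smul_eq_mul]
    by_cases hex : ∃ α, IsConfig α ∧ α ∈ patch F U ⁻¹' cyl (HH G) ζ ∩ cyl (HH F) σ
    · obtain ⟨α, hα, hα1, hα2⟩ := hex
      have hp := patch_congr (F := F) (U := U) hα2
      have hpα : IsConfig (patch F U α) := isConfig_glue hpσ hα hp patch_out
      have eP : patch F U ⁻¹' cyl (HH G) ζ ∩ cyl (HH F) σ = cyl (HH G) α := by
        ext ω
        constructor
        · rintro ⟨h1, h2⟩ e he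
          by_cases heF : e ∈ F
          · rw [h2 e (hFH e heF), hα2 e (hFH e heF)]
          · have q1 := h1 e he
            have q2 := hα1 e he
            rw [patch_out e heF] at q1 q2
            rw [q1, q2]
        · intro h
          refine ⟨fun e he => ?_, fun e he => ?_⟩
          · rw [patch_congr (F := F) (U := U) h e he]; exact hα1 e he
          · rw [h e (HH_mono hFG he)]; exact hα2 e he
      have eQ : cyl (HH G) ζ ∩ cyl (HH F) (patch F U σ) = cyl (HH G) (patch F U α) := by
        ext ω
        constructor
        · rintro ⟨h1, h2⟩ e he
          rw [h1 e he]; exact (hα1 e he).symm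
        · intro h
          refine ⟨fun e he => ?_, fun e he => ?_⟩
          · rw [h e he]; exact hα1 e he
          · rw [h e (HH_mono hFG he)]; exact hp e he
      rw [eP, eQ, ← WW_congr hp, ← WW_congr hα2, mul_comm, mul_comm (WW a b c F α)]
      exact gibbs_step ha hb hc hG hFG hα hpα fun e he => (patch_out e he).symm
    · have hP : μ (patch F U ⁻¹' cyl (HH G) ζ ∩ cyl (HH F) σ) = 0 :=
        measure_mono_null (fun ω hω hcfg => hex ⟨ω, hcfg, hω⟩) hnull
      have hQ : μ (cyl (HH G) ζ ∩ cyl (HH F) (patch F U σ)) = 0 := by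
        refine measure_mono_null (t := {ω | IsConfig ω}ᶜ) ?_ hnull
        intro β hβ hcfg
        have hcfg : IsConfig β := hcfg
        apply hex
        let α : Config := fun e => if e ∈ F then σ e else β e
        have a1 : ∀ e ∈ HH F, α e = σ e := by
          intro e he
          by_cases heF : e ∈ F
          · simp [α, heF]
          · simp only [α, heF, if_false]
            rw [hβ.2 e he, patch_out e heF]
        have a2 : ∀ e, e ∉ F → α e = β e := fun e he => by simp [α, he]
        have a3 : patch F U α = β := by
          funext e
          by_cases heF : e ∈ F
          · rw [hβ.2 e (hFH e heF)]; simp [patch, heF]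
          · rw [patch_out e heF, a2 e heF]
        refine ⟨α, isConfig_glue hσ hcfg a1 a2, ?_, a1⟩
        rw [Set.mem_preimage, a3]; exact hβ.1
      rw [hP, hQ, mul_zero, mul_zero]
  · rw [Measure.smul_apply, Measure.smul_apply, Measure.map_apply (meas_patch F U) .univ,
      Set.preimage_univ, Measure.restrict_apply .univ, Measure.restrict_apply .univ,
      Set.univ_inter, Set.univ_inter, smul_eq_mul, smul_eq_mul, mul_comm, mul_comm (WW a b c F σ)]
    exact gibbs_step ha hb hc hG (Finset.Subset.refl F) hσ hpσ fun e he => (patch_out e he).symm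

lemma quasi_null {a b c : ℝ} (ha : 0 < a) (hb : 0 < b) (hc : 0 < c)
    {μ : Measure Config} (hG : IsGibbs a b c μ) (F U : Finset HexE) (E : Set Config)
    (hE : MeasurableSet E) (h0 : μ E = 0) :
    μ {ω | IsConfig ω ∧ IsConfig (patch F U ω) ∧ patch F U ω ∈ E} = 0 := by
  classical
  have : {ω | IsConfig ω ∧ IsConfig (patch F U ω) ∧ patch F U ω ∈ E} ⊆
      ⋃ T : Finset HexE, {ω | IsConfig ω ∧ IsConfig (patch F U ω) ∧ patch F U ω ∈ E} ∩
        cyl (HH F) (ind T) := by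
    intro ω hω
    obtain ⟨T, hT⟩ := exists_ind F ω
    exact Set.mem_iUnion.2 ⟨T, hω, hT⟩
  refine measure_mono_null this (measure_iUnion_null fun T => ?_)
  rcases Set.eq_empty_or_nonempty ({ω | IsConfig ω ∧ IsConfig (patch F U ω) ∧ patch F U ω ∈ E} ∩
        cyl (HH F) (ind T)) with h | ⟨σ, ⟨h1, h2, _⟩, h3⟩
  · rw [h]; simp
  · have q := congrArg (fun ν : Measure Config => ν E) (quasi ha hb hc hG F U σ h1 h2)
    simp only [Measure.smul_apply, Measure.map_apply (meas_patch F U) hE, smul_eq_mul] at q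
    rw [Measure.restrict_apply (meas_patch F U hE), Measure.restrict_apply hE,
      measure_mono_null Set.inter_subset_left h0, mul_zero, mul_eq_zero] at q
    refine measure_mono_null ?_ (q.resolve_left (WW_ne_zero ha hb hc h2))
    rintro ω ⟨⟨_, _, h5⟩, h6⟩
    exact ⟨h5, fun e he => by rw [h6 e he, h3 e he]⟩

lemma bad_null (a b c : ℝ) (ha : 0 < a) (hb : 0 < b) (hc : 0 < c)
    (μ : Measure Config) (hGibbs : IsGibbs a b c μ) (hTI : TransInvariant μ)
    (hErg : IsErgodicTI μ) : μ Bad = 0 := by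
  have := hGibbs.1
  rcases hErg Bad meas_bad bad_shift with h | h
  · exact h
  exfalso
  have hB : ∀ᵐ ω ∂μ, ω ∈ Bad := by
    rw [ae_iff]
    exact (prob_compl_eq_zero_iff meas_bad).2 h
  have hcfg : ∀ᵐ ω ∂μ, IsConfig ω := by
    rw [ae_iff]
    exact (prob_compl_eq_zero_iff meas_isConfig).2 hGibbs.2.1
  have h2 : ∀ᵐ ω ∂μ, TwoC ω := hB.mono fun ω h => h.2
  have hE : μ {ω | TwoC ω}ᶜ = 0 := h2
  have hq : ∀ᵐ ω ∂μ, ∀ F U : Finset HexE,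
      ¬ (IsConfig ω ∧ IsConfig (patch F U ω) ∧ patch F U ω ∈ {ω | TwoC ω}ᶜ) := by
    rw [ae_all_iff]; intro F
    rw [ae_all_iff]; intro U
    rw [ae_iff]
    simp only [not_not]
    exact quasi_null ha hb hc hGibbs F U _ meas_twoC.compl hE
  have : ∀ᵐ ω ∂μ, False := by
    filter_upwards [hB, hcfg, hq, ae_top μ hTI h2, ae_bot μ hTI h2] with ω w1 w2 w3 w4 w5
    obtain ⟨F, U, p1, p2⟩ := core ω w2 w1.1 w4 w5
    exact w3 F U ⟨w2, p1, p2⟩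
  rw [ae_iff] at this
  simp at this

/-- For an ergodic translation-invariant Gibbs measure, the number of infinite
`{001}`-clusters is almost surely not equal to any finite `k > 1`. -/
theorem no_finite_number_of_infinite_001_clusters
    (a b c : ℝ) (ha : 0 < a) (hb : 0 < b) (hc : 0 < c)
    (μ : Measure Config) (hGibbs : IsGibbs a b c μ) (hTI : TransInvariant μ)
    (hErg : IsErgodicTI μ) (k : ℕ) (hk : 1 < k) :
    μ {ω : Config | numInfClusters ω conf001 = (k : ℕ∞)} = 0 := by
  refine measure_mono_null (fun ω hω => num_bad ω k hk hω) ?_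
  exact bad_null a b c ha hb hc μ hGibbs hTI hErg
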